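/- Let ν > 0. There exist a C^∞ function h₀ : ℝ → ℝ that is 2π-periodic with ∫_{−π}^{π} h₀(x) dx = 0 and sup_{x ∈ ℝ} |h₀'(x)| < 1, a time t₀ > 0, and a function h : [0,t₀] × ℝ → ℝ, 2π-periodic in x and smooth, with h(0,·) = h₀, which is a classical solution of ∂_t h = ∂_x((∂_x h)³ − ∂_x h) − ν ∂_x⁴ h on [0,t₀] × ℝ, such that sup_{x ∈ ℝ} |∂_x h(t₀,x)| > 1. -/

import Mathlib

open Real MeasureTheory Set Filter

noncomputable section


theorem contDiffOn_of_closed (Ω : Set (ℝ × ℝ)) (hΩ : IsOpen Ω) (P : (ℝ × ℝ → ℝ) → Prop)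
    (hc : ∀ f, P f → ContinuousOn f Ω)
    (hd : ∀ f, P f → ∃ ft fx, P ft ∧ P fx ∧ ∀ p ∈ Ω,
      HasDerivAt (fun s => f (s, p.2)) (ft p) p.1 ∧ HasDerivAt (fun y => f (p.1, y)) (fx p) p.2) :
    ∀ n : ℕ, ∀ f, P f → ContDiffOn ℝ n f Ω := by
  intro n
  induction n with
  | zero => intro f hf; simpa using hc f hf
  | succ n ih =>
    intro f hf
    obtain ⟨ft, fx, hft, hfx, hder⟩ := hd f hf
    have h1 := ih ft hft
    have h2 := ih fx hfx
    push_cast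
    rw [contDiffOn_succ_iff_hasFDerivWithinAt_of_uniqueDiffOn hΩ.uniqueDiffOn]
    refine ⟨by intro h; simp at h, fun p =>
      (ContinuousLinearMap.toSpanSingleton ℝ (ft p)).coprod
        (ContinuousLinearMap.toSpanSingleton ℝ (fx p)), ?_, ?_⟩
    · rw [contDiffOn_clm_apply]
      intro y
      simp only [ContinuousLinearMap.coprod_apply, ContinuousLinearMap.toSpanSingleton_apply,
        smul_eq_mul]
      exact (contDiffOn_const.mul h1).add (contDiffOn_const.mul h2)
    · intro p hp
      have key := hasStrictFDerivAt_uncurry_coprod (𝕜 := ℝ) (u := p) (f := fun a b => f (a, b))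
        (f₁ := fun a b => ContinuousLinearMap.toSpanSingleton ℝ (ft (a, b)))
        (f₂ := fun a b => ContinuousLinearMap.toSpanSingleton ℝ (fx (a, b)))
        (by
          filter_upwards [hΩ.mem_nhds hp] with q hq
          exact (hder q hq).1.hasFDerivAt)
        (by
          filter_upwards [hΩ.mem_nhds hp] with q hq
          exact (hder q hq).2.hasFDerivAt)
        (by
          have := (hc ft hft).continuousAt (hΩ.mem_nhds hp)
          exact (ContinuousLinearMap.toSpanSingletonCLE (𝕜 := ℝ) (E := ℝ)).continuous.continuousAt.comp this)
        (by
          have := (hc fx hfx).continuousAt (hΩ.mem_nhds hp)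
          exact (ContinuousLinearMap.toSpanSingletonCLE (𝕜 := ℝ) (E := ℝ)).continuous.continuousAt.comp this)
      exact key.hasFDerivAt.hasFDerivWithinAt

def wt (k : ℤ) : ℝ := Real.exp (-|(k : ℝ)|) / (1 + (k : ℝ) ^ 2)

theorem wt_pos (k : ℤ) : 0 < wt k := by unfold wt; positivity

theorem wt_neg (k : ℤ) : wt (-k) = wt k := by unfold wt; simp

theorem summable_pow_wt (n : ℕ) : Summable fun k : ℤ => |(k : ℝ)| ^ n * wt k := by
  have h : Summable fun k : ℕ => |((k : ℤ) : ℝ)| ^ n * wt k := by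
    refine Summable.of_nonneg_of_le (fun k => mul_nonneg (by positivity) (wt_pos _).le) (fun k => ?_)
      (Real.summable_pow_mul_exp_neg_nat_mul n (r := 1) one_pos)
    unfold wt
    simp only [Int.cast_natCast, Nat.abs_cast, neg_mul, one_mul]
    gcongr
    exact div_le_self (by positivity) (by nlinarith [sq_nonneg (k : ℝ)])
  refine Summable.of_nat_of_neg h ?_
  simpa [wt_neg] using h

theorem summable_wt : Summable wt := by simpa using summable_pow_wt 0

theorem summable_rr : Summable fun k : ℤ => 1 / (1 + (k : ℝ) ^ 2) := by
  have h : Summable fun k : ℕ => 1 / (1 + ((k : ℤ) : ℝ) ^ 2) := by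
    have h2 : Summable fun k : ℕ => 2 * (1 / ((k + 1 : ℕ) : ℝ) ^ 2) :=
      ((summable_nat_add_iff 1).2 (Real.summable_one_div_nat_pow.2 one_lt_two)).mul_left 2
    refine Summable.of_nonneg_of_le (fun k => by positivity) (fun k => ?_) h2
    push_cast
    rw [mul_one_div, div_le_div_iff₀ (by positivity) (by positivity)]
    nlinarith [sq_nonneg ((k : ℝ) - 1)]
  refine Summable.of_nat_of_neg h ?_
  simpa using h

theorem wt_mul_le (k j : ℤ) : wt j * wt (k - j) ≤
    wt k * (2 * (1 / (1 + (j : ℝ) ^ 2)) + 2 * (1 / (1 + ((k - j : ℤ) : ℝ) ^ 2))) := by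
  unfold wt
  push_cast
  set a : ℝ := (j : ℝ)
  set b : ℝ := (k : ℝ)
  have h1 : Real.exp (-|a|) * Real.exp (-|b - a|) ≤ Real.exp (-|b|) := by
    rw [← Real.exp_add]
    apply Real.exp_le_exp.2
    have := abs_add_le a (b - a)
    rw [add_sub_cancel] at this
    linarith
  have h2 : 1 / (1 + a ^ 2) * (1 / (1 + (b - a) ^ 2)) ≤
      1 / (1 + b ^ 2) * (2 * (1 / (1 + a ^ 2)) + 2 * (1 / (1 + (b - a) ^ 2))) := by
    have : 1 / (1 + b ^ 2) * (2 * (1 / (1 + a ^ 2)) + 2 * (1 / (1 + (b - a) ^ 2)))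
      - 1 / (1 + a ^ 2) * (1 / (1 + (b - a) ^ 2))
      = (2 * (1 + (b - a) ^ 2) + 2 * (1 + a ^ 2) - (1 + b ^ 2)) /
        ((1 + b ^ 2) * (1 + a ^ 2) * (1 + (b - a) ^ 2)) := by
      field_simp
    have h3 : 0 ≤ (2 * (1 + (b - a) ^ 2) + 2 * (1 + a ^ 2) - (1 + b ^ 2)) /
        ((1 + b ^ 2) * (1 + a ^ 2) * (1 + (b - a) ^ 2)) := by
      apply div_nonneg _ (by positivity)
      nlinarith [sq_nonneg (b - 2 * a)]
    linarith
  calc Real.exp (-|a|) / (1 + a ^ 2) * (Real.exp (-|b - a|) / (1 + (b - a) ^ 2))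
      = (Real.exp (-|a|) * Real.exp (-|b - a|)) * (1 / (1 + a ^ 2) * (1 / (1 + (b - a) ^ 2))) := by
        field_simp
    _ ≤ Real.exp (-|b|) * (1 / (1 + b ^ 2) *
        (2 * (1 / (1 + a ^ 2)) + 2 * (1 / (1 + (b - a) ^ 2)))) := by
        apply mul_le_mul h1 h2 (by positivity) (by positivity)
    _ = _ := by ring

def Cw : ℝ := 4 * ∑' k : ℤ, 1 / (1 + (k : ℝ) ^ 2)

theorem wt_conv (k : ℤ) : Summable (fun j => wt j * wt (k - j)) ∧
    ∑' j, wt j * wt (k - j) ≤ Cw * wt k := by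
  have s1 := summable_rr
  have s2 : Summable fun j : ℤ => 1 / (1 + ((k - j : ℤ) : ℝ) ^ 2) :=
    (Equiv.subLeft k).summable_iff.2 s1
  have e2 : ∑' j : ℤ, 1 / (1 + ((k - j : ℤ) : ℝ) ^ 2) = ∑' j : ℤ, 1 / (1 + (j : ℝ) ^ 2) :=
    (Equiv.subLeft k).tsum_eq (fun j : ℤ => 1 / (1 + (j : ℝ) ^ 2))
  have s3 := ((s1.mul_left 2).add (s2.mul_left 2)).mul_left (wt k)
  have hs : Summable (fun j => wt j * wt (k - j)) :=
    Summable.of_nonneg_of_le (fun j => mul_nonneg (wt_pos _).le (wt_pos _).le)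
      (fun j => wt_mul_le k j) s3
  refine ⟨hs, (hs.tsum_le_tsum (fun j => wt_mul_le k j) s3).trans ?_⟩
  rw [tsum_mul_left, (s1.mul_left 2).tsum_add (s2.mul_left 2), tsum_mul_left, tsum_mul_left, e2, Cw]
  apply le_of_eq; ring

theorem Cw_nonneg : 0 ≤ Cw := by unfold Cw; positivity

/-- good coefficient families -/
def Good (c : ℤ → ℝ → ℝ) : Prop :=
  (∀ k, Continuous (c k)) ∧ ∀ j : ℕ, ∃ v : ℤ → ℝ, Summable v ∧
    ∀ (k : ℤ) (t : ℝ), |(k : ℝ) ^ j * c k t| ≤ v k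

def Fld (j : ℕ) (c : ℤ → ℝ → ℝ) (p : ℝ × ℝ) : ℝ :=
  ∑' k : ℤ, (k : ℝ) ^ j * c k p.1 * Real.cos (k * p.2 + j * (π / 2))

theorem good_of_bound {c : ℤ → ℝ → ℝ} (hc : ∀ k, Continuous (c k)) (M : ℝ)
    (hM : ∀ k t, |c k t| ≤ M * wt k) : Good c := by
  refine ⟨hc, fun j => ⟨fun k => M * (|(k : ℝ)| ^ j * wt k), (summable_pow_wt _).mul_left M,
    fun k t => ?_⟩⟩
  rw [abs_mul, abs_pow]
  calc |(k : ℝ)| ^ j * |c k t| ≤ |(k : ℝ)| ^ j * (M * wt k) := by gcongr; exact hM k t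
    _ = _ := by ring

theorem Good.bound {c : ℤ → ℝ → ℝ} (h : Good c) (j : ℕ) : ∃ v : ℤ → ℝ, Summable v ∧
    ∀ (k : ℤ) (t x : ℝ), ‖(k : ℝ) ^ j * c k t * Real.cos x‖ ≤ v k := by
  obtain ⟨v, hv, hb⟩ := h.2 j
  refine ⟨v, hv, fun k t x => ?_⟩
  rw [norm_mul, Real.norm_eq_abs, Real.norm_eq_abs]
  calc |(k : ℝ) ^ j * c k t| * |Real.cos x| ≤ |(k : ℝ) ^ j * c k t| * 1 := by
        gcongr; exact Real.abs_cos_le_one x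
    _ ≤ _ := by rw [mul_one]; exact hb k t

theorem Good.summable {c : ℤ → ℝ → ℝ} (h : Good c) (j : ℕ) (t : ℝ) (x : ℤ → ℝ) :
    Summable fun k : ℤ => (k : ℝ) ^ j * c k t * Real.cos (x k) := by
  obtain ⟨v, hv, hb⟩ := h.bound j
  exact Summable.of_norm_bounded hv (fun k => hb k t _)

theorem Good.cont {c : ℤ → ℝ → ℝ} (h : Good c) (j : ℕ) : Continuous (Fld j c) := by
  obtain ⟨v, hv, hb⟩ := h.bound j
  unfold Fld
  refine continuous_tsum (fun k => ?_) hv (fun k p => hb k _ _)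
  have := h.1 k
  fun_prop

theorem Good.dx {c : ℤ → ℝ → ℝ} (h : Good c) (j : ℕ) (t x : ℝ) :
    HasDerivAt (fun y => Fld j c (t, y)) (Fld (j + 1) c (t, x)) x := by
  obtain ⟨v, hv, hb⟩ := h.bound (j + 1)
  unfold Fld
  refine hasDerivAt_tsum hv (g := fun (k : ℤ) y => (k : ℝ) ^ j * c k t * Real.cos (k * y + j * (π / 2)))
    (g' := fun (k : ℤ) y => (k : ℝ) ^ (j + 1) * c k t * Real.cos (k * y + (j + 1 : ℕ) * (π / 2)))
    (fun k y => ?_) (fun k y => hb k t _) (y₀ := 0) (h.summable j t _) x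
  have h1 : HasDerivAt (fun y : ℝ => (k : ℝ) * y + j * (π / 2)) k y := by
    simpa using ((hasDerivAt_id y).const_mul (k : ℝ)).add_const (j * (π / 2))
  have h2 := (h1.cos).const_mul ((k : ℝ) ^ j * c k t)
  refine h2.congr_deriv ?_
  have : (k : ℝ) * y + (j + 1 : ℕ) * (π / 2) = k * y + j * (π / 2) + π / 2 := by push_cast; ring
  rw [this, Real.cos_add_pi_div_two]
  ring

theorem Good.dt {c d : ℤ → ℝ → ℝ} (h : Good c) (hd : Good d)
    (hcd : ∀ k, ∀ t > -1, HasDerivAt (c k) (d k t) t) (j : ℕ) (t x : ℝ) (ht : -1 < t) :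
    HasDerivAt (fun s => Fld j c (s, x)) (Fld j d (t, x)) t := by
  obtain ⟨v, hv, hb⟩ := hd.bound j
  unfold Fld
  refine hasDerivAt_tsum_of_isPreconnected hv isOpen_Ioi isPreconnected_Ioi
    (g := fun (k : ℤ) s => (k : ℝ) ^ j * c k s * Real.cos (k * x + j * (π / 2)))
    (g' := fun (k : ℤ) s => (k : ℝ) ^ j * d k s * Real.cos (k * x + j * (π / 2)))
    (t := Ioi (-1)) (y₀ := t) (fun k s hs => ?_) (fun k s _ => hb k s _) ht (h.summable j t _) ht
  exact ((hcd k s hs).const_mul _).mul_const _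

theorem Good.smul {c : ℤ → ℝ → ℝ} (h : Good c) (a : ℝ) : Good (fun k t => a * c k t) := by
  refine ⟨fun k => continuous_const.mul (h.1 k), fun j => ?_⟩
  obtain ⟨v, hv, hb⟩ := h.2 j
  refine ⟨fun k => |a| * v k, hv.mul_left _, fun k t => ?_⟩
  rw [mul_left_comm, abs_mul]
  exact mul_le_mul_of_nonneg_left (hb k t) (abs_nonneg a)

theorem Good.kpow {c : ℤ → ℝ → ℝ} (h : Good c) (m : ℕ) : Good (fun k t => (k : ℝ) ^ m * c k t) := by
  refine ⟨fun k => continuous_const.mul (h.1 k), fun j => ?_⟩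
  obtain ⟨v, hv, hb⟩ := h.2 (j + m)
  refine ⟨v, hv, fun k t => ?_⟩
  rw [← mul_assoc, ← pow_add]
  exact hb k t

theorem Good.add {c d : ℤ → ℝ → ℝ} (h : Good c) (h' : Good d) : Good (fun k t => c k t + d k t) := by
  refine ⟨fun k => (h.1 k).add (h'.1 k), fun j => ?_⟩
  obtain ⟨v, hv, hb⟩ := h.2 j
  obtain ⟨v', hv', hb'⟩ := h'.2 j
  refine ⟨fun k => v k + v' k, hv.add hv', fun k t => ?_⟩
  rw [mul_add]
  exact (abs_add_le _ _).trans (add_le_add (hb k t) (hb' k t))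

theorem Fld_add {c d : ℤ → ℝ → ℝ} (h : Good c) (h' : Good d) (j : ℕ) (p : ℝ × ℝ) :
    Fld j (fun k t => c k t + d k t) p = Fld j c p + Fld j d p := by
  unfold Fld
  rw [← (h.summable j p.1 _).tsum_add (h'.summable j p.1 _)]
  congr 1; ext k; ring

theorem Fld_smul (c : ℤ → ℝ → ℝ) (a : ℝ) (j : ℕ) (p : ℝ × ℝ) :
    Fld j (fun k t => a * c k t) p = a * Fld j c p := by
  unfold Fld
  rw [← tsum_mul_left]
  congr 1; ext k; ring

theorem Fld_ksq (c : ℤ → ℝ → ℝ) (j : ℕ) (p : ℝ × ℝ) :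
    Fld j (fun k t => (k : ℝ) ^ 2 * c k t) p = - Fld (j + 2) c p := by
  unfold Fld
  rw [← tsum_neg]
  congr 1; ext k
  have : (k : ℝ) * p.2 + (j + 2 : ℕ) * (π / 2) = k * p.2 + j * (π / 2) + π := by push_cast; ring
  rw [this, Real.cos_add_pi]
  ring

theorem Fld_kfour (c : ℤ → ℝ → ℝ) (j : ℕ) (p : ℝ × ℝ) :
    Fld j (fun k t => (k : ℝ) ^ 4 * c k t) p = Fld (j + 4) c p := by
  have : (fun (k : ℤ) t => (k : ℝ) ^ 4 * c k t) = fun (k : ℤ) t => (k : ℝ) ^ 2 * ((k : ℝ) ^ 2 * c k t) := by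
    ext k t; ring
  rw [this, Fld_ksq (fun (k : ℤ) t => (k : ℝ) ^ 2 * c k t), Fld_ksq]; simp

theorem cos_prod {a b : ℤ → ℝ} (ha : Summable fun k => |a k|) (hb : Summable fun k => |b k|)
    (eb : ∀ k, b (-k) = b k) (x : ℝ) :
    (∑' k : ℤ, a k * Real.cos (k * x)) * (∑' k : ℤ, b k * Real.cos (k * x)) =
      ∑' n : ℤ, (∑' j, a j * b (n - j)) * Real.cos (n * x) := by
  have nb : ∀ (a : ℤ → ℝ) (k : ℤ), ‖a k * Real.cos (k * x)‖ ≤ |a k| := fun a k => by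
    rw [norm_mul, Real.norm_eq_abs, Real.norm_eq_abs]
    exact mul_le_of_le_one_right (abs_nonneg _) (Real.abs_cos_le_one _)
  have sa : Summable fun k : ℤ => ‖a k * Real.cos (k * x)‖ :=
    Summable.of_nonneg_of_le (fun _ => norm_nonneg _) (nb a) ha
  have sb : Summable fun k : ℤ => ‖b k * Real.cos (k * x)‖ :=
    Summable.of_nonneg_of_le (fun _ => norm_nonneg _) (nb b) hb
  rw [tsum_mul_tsum_of_summable_norm sa sb]
  have sab : Summable fun p : ℤ × ℤ => |a p.1 * b p.2| := by
    have := Summable.mul_of_nonneg ha hb (fun _ => abs_nonneg _) (fun _ => abs_nonneg _)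
    simpa [abs_mul] using this
  have sg : ∀ y : ℤ × ℤ → ℝ, Summable fun p : ℤ × ℤ => a p.1 * b p.2 * Real.cos (y p) := fun y => by
    refine Summable.of_norm_bounded sab (fun p => ?_)
    rw [norm_mul, Real.norm_eq_abs, Real.norm_eq_abs]
    exact mul_le_of_le_one_right (abs_nonneg _) (Real.abs_cos_le_one _)
  have s1 := sg (fun p => (p.1 + p.2 : ℤ) * x)
  have s2 := sg (fun p => (p.1 - p.2 : ℤ) * x)
  have e12 : ∑' p : ℤ × ℤ, a p.1 * b p.2 * Real.cos ((p.1 - p.2 : ℤ) * x) =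
      ∑' p : ℤ × ℤ, a p.1 * b p.2 * Real.cos ((p.1 + p.2 : ℤ) * x) := by
    rw [← ((Equiv.refl ℤ).prodCongr (Equiv.neg ℤ)).tsum_eq]
    congr 1; ext p
    simp [eb]
  have e1 : ∑' p : ℤ × ℤ, (a p.1 * Real.cos (p.1 * x)) * (b p.2 * Real.cos (p.2 * x)) =
      ∑' p : ℤ × ℤ, a p.1 * b p.2 * Real.cos ((p.1 + p.2 : ℤ) * x) := by
    have : ∀ p : ℤ × ℤ, (a p.1 * Real.cos (p.1 * x)) * (b p.2 * Real.cos (p.2 * x)) =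
        (1 / 2) * (a p.1 * b p.2 * Real.cos ((p.1 + p.2 : ℤ) * x)) +
        (1 / 2) * (a p.1 * b p.2 * Real.cos ((p.1 - p.2 : ℤ) * x)) := fun p => by
      push_cast
      rw [add_mul, sub_mul, Real.cos_add, Real.cos_sub]
      ring
    rw [tsum_congr this, (s1.mul_left _).tsum_add (s2.mul_left _), tsum_mul_left, tsum_mul_left, e12]
    ring
  rw [e1]
  let E : ℤ × ℤ ≃ ℤ × ℤ :=
    { toFun := fun p => (p.2, p.1 - p.2)
      invFun := fun p => (p.1 + p.2, p.1)
      left_inv := fun p => by ext <;> simp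
      right_inv := fun p => by ext <;> simp }
  have s3 := E.summable_iff.2 s1
  rw [← E.tsum_eq]
  have := s3.tsum_prod' (fun n => s3.prod_factor n)
  simp only [Function.comp_def] at this
  rw [this]
  congr 1; ext n
  rw [← tsum_mul_right]
  congr 1; ext j
  simp [E]


open scoped BoundedContinuousFunction in
abbrev XX := (ℤ × ℝ) →ᵇ ℝ

def mw (k j : ℤ) : ℝ := wt j * wt (k - j) / wt k

theorem mw_nonneg (k j : ℤ) : 0 ≤ mw k j :=
  div_nonneg (mul_nonneg (wt_pos _).le (wt_pos _).le) (wt_pos _).le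

theorem mw_summable (k : ℤ) : Summable (mw k) := (wt_conv k).1.div_const _

theorem mw_tsum (k : ℤ) : ∑' j, mw k j ≤ Cw := by
  unfold mw
  rw [tsum_div_const, div_le_iff₀ (wt_pos k)]
  exact (wt_conv k).2

theorem cv_term (b d : XX) (k j : ℤ) (t : ℝ) :
    ‖mw k j * b (j, t) * d (k - j, t)‖ ≤ mw k j * (‖b‖ * ‖d‖) := by
  rw [norm_mul, norm_mul, Real.norm_of_nonneg (mw_nonneg k j), mul_assoc]
  have := mw_nonneg k j
  gcongr
  · exact b.norm_coe_le_norm _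
  · exact d.norm_coe_le_norm _

theorem cv_summable (b d : XX) (k : ℤ) (t : ℝ) :
    Summable fun j => mw k j * b (j, t) * d (k - j, t) :=
  Summable.of_norm_bounded ((mw_summable k).mul_right _) (fun j => cv_term b d k j t)

theorem cv_bound (b d : XX) (p : ℤ × ℝ) :
    ‖∑' j, mw p.1 j * b (j, p.2) * d (p.1 - j, p.2)‖ ≤ Cw * (‖b‖ * ‖d‖) := by
  refine (tsum_of_norm_bounded ((mw_summable p.1).mul_right (‖b‖ * ‖d‖)).hasSum
    (fun j => cv_term b d p.1 j p.2)).trans ?_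
  rw [tsum_mul_right]
  gcongr
  exact mw_tsum p.1

def cv (b d : XX) : XX :=
  BoundedContinuousFunction.ofNormedAddCommGroup
    (fun p : ℤ × ℝ => ∑' j, mw p.1 j * b (j, p.2) * d (p.1 - j, p.2))
    (by
      rw [continuous_prod_of_discrete_left]
      intro k
      refine continuous_tsum (fun j => ?_) ((mw_summable k).mul_right (‖b‖ * ‖d‖))
        (fun j t => cv_term b d k j t)
      have h1 := b.continuous
      have h2 := d.continuous
      fun_prop)
    (Cw * (‖b‖ * ‖d‖)) (cv_bound b d)

theorem cv_apply (b d : XX) (k : ℤ) (t : ℝ) :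
    cv b d (k, t) = ∑' j, mw k j * b (j, t) * d (k - j, t) := rfl

theorem cv_norm (b d : XX) : ‖cv b d‖ ≤ Cw * (‖b‖ * ‖d‖) :=
  BoundedContinuousFunction.norm_ofNormedAddCommGroup_le _
    (mul_nonneg Cw_nonneg (by positivity)) _

theorem cv_sub_left (b b' d : XX) : cv (b - b') d = cv b d - cv b' d := by
  ext ⟨k, t⟩
  rw [BoundedContinuousFunction.sub_apply, cv_apply, cv_apply, cv_apply,
    ← (cv_summable b d k t).tsum_sub (cv_summable b' d k t)]
  congr 1; ext j
  rw [BoundedContinuousFunction.sub_apply]; ring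

theorem cv_sub_right (b d d' : XX) : cv b (d - d') = cv b d - cv b d' := by
  ext ⟨k, t⟩
  rw [BoundedContinuousFunction.sub_apply, cv_apply, cv_apply, cv_apply,
    ← (cv_summable b d k t).tsum_sub (cv_summable b d' k t)]
  congr 1; ext j
  rw [BoundedContinuousFunction.sub_apply]; ring

def IsEven (b : XX) : Prop := ∀ k t, b (-k, t) = b (k, t)

theorem mw_neg (k j : ℤ) : mw (-k) (-j) = mw k j := by
  unfold mw
  rw [wt_neg, wt_neg, show -k - -j = -(k - j) by ring, wt_neg]

theorem IsEven.cv {b d : XX} (hb : IsEven b) (hd : IsEven d) : IsEven (cv b d) := by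
  intro k t
  rw [cv_apply, cv_apply, ← (Equiv.neg ℤ).tsum_eq]
  congr 1; ext j
  rw [Equiv.neg_apply, mw_neg, hb, show -k - -j = -(k - j) by ring, hd]

theorem duh_int (L : ℝ) (hL : 0 < L) (τ : ℝ) :
    ∫ s in (-1)..τ, Real.exp (L * s) = (Real.exp (L * τ) - Real.exp (L * (-1))) / L := by
  rw [intervalIntegral.integral_eq_sub_of_hasDerivAt (f := fun s => Real.exp (L * s) / L)]
  · ring
  · intro x _
    have h1 : HasDerivAt (fun s : ℝ => L * s) L x := by
      simpa using (hasDerivAt_id x).const_mul L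
    refine (h1.exp.div_const L).congr_deriv ?_
    field_simp
  · exact Continuous.intervalIntegrable (by fun_prop) _ _

theorem duh_bound (L : ℝ) (hL : 0 < L) (f : ℝ → ℝ) (M : ℝ) (hM : ∀ s, |f s| ≤ M)
    (τ : ℝ) (hτ : -1 ≤ τ) :
    |Real.exp (-(L * τ)) * ∫ s in (-1)..τ, Real.exp (L * s) * f s| ≤ M / L := by
  have hM0 : 0 ≤ M := (abs_nonneg _).trans (hM 0)
  have h1 : ‖∫ s in (-1)..τ, Real.exp (L * s) * f s‖ ≤ ∫ s in (-1)..τ, Real.exp (L * s) * M := by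
    refine intervalIntegral.norm_integral_le_of_norm_le hτ ?_
      (Continuous.intervalIntegrable (by fun_prop) _ _)
    refine Eventually.of_forall fun s _ => ?_
    rw [norm_mul, Real.norm_of_nonneg (Real.exp_pos _).le]
    gcongr
    exact hM s
  rw [intervalIntegral.integral_mul_const, duh_int L hL] at h1
  rw [abs_mul, abs_of_pos (Real.exp_pos _)]
  calc Real.exp (-(L * τ)) * |∫ s in (-1)..τ, Real.exp (L * s) * f s|
      ≤ Real.exp (-(L * τ)) * ((Real.exp (L * τ) - Real.exp (L * (-1))) / L * M) := by
        gcongr; exact h1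
    _ ≤ Real.exp (-(L * τ)) * (Real.exp (L * τ) / L * M) := by
        gcongr
        linarith [Real.exp_pos (L * (-1))]
    _ = (Real.exp (-(L * τ)) * Real.exp (L * τ)) * (M / L) := by ring
    _ = M / L := by rw [← Real.exp_add]; simp

def duh (L : ℝ) (f : ℝ → ℝ) (t : ℝ) : ℝ :=
  Real.exp (-(L * max t (-1))) * ∫ s in (-1)..(max t (-1)), Real.exp (L * s) * f s

theorem duh_cont (L : ℝ) (f : ℝ → ℝ) (hf : Continuous f) : Continuous (duh L f) := by
  unfold duh
  have h1 : Continuous fun τ => ∫ s in (-1)..τ, Real.exp (L * s) * f s :=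
    intervalIntegral.continuous_primitive
      (fun a b => Continuous.intervalIntegrable (by fun_prop) _ _) _
  have h2 : Continuous fun t : ℝ => max t (-1) := by fun_prop
  exact (by fun_prop : Continuous fun t : ℝ => Real.exp (-(L * max t (-1)))).mul (h1.comp h2)

theorem duh_deriv (L : ℝ) (f : ℝ → ℝ) (hf : Continuous f) (t : ℝ) (ht : -1 < t) :
    HasDerivAt (duh L f) (-L * duh L f t + f t) t := by
  have hc : Continuous fun s => Real.exp (L * s) * f s := by fun_prop
  have h1 : HasDerivAt (fun τ => ∫ s in (-1)..τ, Real.exp (L * s) * f s)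
      (Real.exp (L * t) * f t) t :=
    intervalIntegral.integral_hasDerivAt_right (hc.intervalIntegrable _ _)
      (hc.stronglyMeasurableAtFilter _ _) hc.continuousAt
  have h2 : HasDerivAt (fun s : ℝ => -(L * s)) (-L) t := by
    simpa using (hasDerivAt_id t).const_mul L |>.fun_neg
  have h3 := h2.exp.mul h1
  have e : duh L f =ᶠ[nhds t] (fun τ => Real.exp (-(L * τ))) *
      (fun τ => ∫ s in (-1)..τ, Real.exp (L * s) * f s) := by
    filter_upwards [Ioi_mem_nhds ht] with s hs
    simp [duh, max_eq_left (le_of_lt (mem_Ioi.1 hs))]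
  refine (h3.congr_of_eventuallyEq e).congr_deriv ?_
  unfold duh
  rw [max_eq_left ht.le]
  have : Real.exp (-(L * t)) * (Real.exp (L * t) * f t) = f t := by
    rw [← mul_assoc, ← Real.exp_add]; simp
  rw [this]; ring

theorem DD_bound (f : XX) (p : ℤ × ℝ) :
    ‖-((p.1 : ℝ) ^ 2) * duh ((p.1 : ℝ) ^ 4) (fun s => f (p.1, s)) p.2‖ ≤ ‖f‖ := by
  obtain ⟨k, t⟩ := p
  dsimp only
  rcases eq_or_ne k 0 with rfl | hk
  · simp
  have hk1 : (1 : ℝ) ≤ (k : ℝ) ^ 2 := by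
    have : (1 : ℤ) ≤ k ^ 2 := by have := sq_nonneg k; have := pow_ne_zero 2 hk; omega
    exact_mod_cast this
  have hb := duh_bound ((k : ℝ) ^ 4) (by positivity) (fun s => f (k, s)) ‖f‖
    (fun s => f.norm_coe_le_norm _) (max t (-1)) (le_max_right _ _)
  rw [norm_mul, norm_neg, Real.norm_of_nonneg (by positivity)]
  calc (k : ℝ) ^ 2 * ‖duh ((k : ℝ) ^ 4) (fun s => f (k, s)) t‖ ≤ (k : ℝ) ^ 2 * (‖f‖ / (k : ℝ) ^ 4) := by
        gcongr; exact hb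
    _ = ‖f‖ / (k : ℝ) ^ 2 := by field_simp
    _ ≤ ‖f‖ := div_le_self (norm_nonneg _) hk1

def DD (f : XX) : XX :=
  BoundedContinuousFunction.ofNormedAddCommGroup
    (fun p : ℤ × ℝ => -((p.1 : ℝ) ^ 2) * duh ((p.1 : ℝ) ^ 4) (fun s => f (p.1, s)) p.2)
    (by
      rw [continuous_prod_of_discrete_left]
      intro k
      have h1 := f.continuous
      have h2 := duh_cont ((k : ℝ) ^ 4) (fun s => f (k, s)) (by fun_prop)
      exact h2.const_mul (-((k : ℝ) ^ 2)))
    ‖f‖ (DD_bound f)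

theorem DD_apply (f : XX) (k : ℤ) (t : ℝ) :
    DD f (k, t) = -((k : ℝ) ^ 2) * duh ((k : ℝ) ^ 4) (fun s => f (k, s)) t := rfl

theorem DD_norm (f : XX) : ‖DD f‖ ≤ ‖f‖ :=
  BoundedContinuousFunction.norm_ofNormedAddCommGroup_le _ (norm_nonneg _) _

theorem DD_sub (f g : XX) : DD (f - g) = DD f - DD g := by
  ext ⟨k, t⟩
  rw [BoundedContinuousFunction.sub_apply, DD_apply, DD_apply, DD_apply, ← mul_sub]
  congr 1
  unfold duh
  rw [← mul_sub, ← intervalIntegral.integral_sub]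
  · congr 1; congr 1; ext s
    dsimp only
    rw [BoundedContinuousFunction.sub_apply]; ring
  · have h1 := f.continuous
    exact Continuous.intervalIntegrable (by fun_prop) _ _
  · have h1 := g.continuous
    exact Continuous.intervalIntegrable (by fun_prop) _ _

theorem IsEven.DD {f : XX} (hf : IsEven f) : IsEven (DD f) := by
  intro k t
  rw [DD_apply, DD_apply]
  have : (fun s => f (-k, s)) = fun s => f (k, s) := by ext s; exact hf k s
  rw [this]
  push_cast
  congr 2 <;> ring

def NL (b : XX) : XX := cv b (cv b b) - b

theorem IsEven.NL {b : XX} (hb : IsEven b) : IsEven (NL b) := by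
  intro k t
  unfold _root_.NL
  rw [BoundedContinuousFunction.sub_apply, BoundedContinuousFunction.sub_apply, hb,
    (hb.cv (hb.cv hb)) k t]

theorem NL_norm (b : XX) (R : ℝ) (hb : ‖b‖ ≤ R) : ‖NL b‖ ≤ Cw ^ 2 * R ^ 3 + R := by
  have hC := Cw_nonneg
  have hR : 0 ≤ R := (norm_nonneg _).trans hb
  have h1 : ‖cv b b‖ ≤ Cw * (R * R) := (cv_norm b b).trans (by gcongr)
  have h2 : ‖cv b (cv b b)‖ ≤ Cw * (R * (Cw * (R * R))) := (cv_norm _ _).trans (by gcongr)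
  calc ‖NL b‖ ≤ ‖cv b (cv b b)‖ + ‖b‖ := norm_sub_le _ _
    _ ≤ Cw * (R * (Cw * (R * R))) + R := add_le_add h2 hb
    _ = _ := by ring

theorem NL_lip (b d : XX) (R : ℝ) (hb : ‖b‖ ≤ R) (hd : ‖d‖ ≤ R) :
    ‖NL b - NL d‖ ≤ (3 * Cw ^ 2 * R ^ 2 + 1) * ‖b - d‖ := by
  have hC := Cw_nonneg
  have hR : 0 ≤ R := (norm_nonneg _).trans hb
  have e : NL b - NL d = cv (b - d) (cv b b) + cv d (cv (b - d) b) + cv d (cv d (b - d)) - (b - d) := by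
    unfold NL
    rw [cv_sub_left, cv_sub_left, cv_sub_right, cv_sub_right, cv_sub_right]
    abel
  have h1 : ‖cv b b‖ ≤ Cw * (R * R) := (cv_norm b b).trans (by gcongr)
  have h2 : ‖cv (b - d) (cv b b)‖ ≤ Cw * (‖b - d‖ * (Cw * (R * R))) := (cv_norm _ _).trans (by gcongr)
  have h3 : ‖cv (b - d) b‖ ≤ Cw * (‖b - d‖ * R) := (cv_norm _ _).trans (by gcongr)
  have h4 : ‖cv d (cv (b - d) b)‖ ≤ Cw * (R * (Cw * (‖b - d‖ * R))) := (cv_norm _ _).trans (by gcongr)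
  have h5 : ‖cv d (b - d)‖ ≤ Cw * (R * ‖b - d‖) := (cv_norm _ _).trans (by gcongr)
  have h6 : ‖cv d (cv d (b - d))‖ ≤ Cw * (R * (Cw * (R * ‖b - d‖))) := (cv_norm _ _).trans (by gcongr)
  rw [e]
  refine (norm_sub_le _ _).trans ?_
  have := norm_add₃_le (a := cv (b - d) (cv b b)) (b := cv d (cv (b - d) b)) (c := cv d (cv d (b - d)))
  nlinarith [this, h2, h4, h6]

theorem exists_fixed (φ : XX) (hφ : IsEven φ) (η : ℝ) (hη : 0 < η) : ∃ ε₀ : ℝ, 0 < ε₀ ∧ ∀ ε : ℝ, 0 < ε → ε < ε₀ →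
    ∃ b : XX, IsEven b ∧ ‖b - φ‖ ≤ η ∧ b = φ + ε • DD (NL b) := by
  set R : ℝ := ‖φ‖ + η
  have hR : 0 ≤ R := by positivity
  have hC := Cw_nonneg
  set A : ℝ := Cw ^ 2 * R ^ 3 + R + 1
  set B : ℝ := 3 * Cw ^ 2 * R ^ 2 + 1
  have hA : 0 < A := by positivity
  have hB : 0 < B := by positivity
  refine ⟨min (η / A) (1 / (2 * B)), by positivity, fun ε h0 h1 => ?_⟩
  have hεA : ε * A ≤ η := by
    have := h1.trans_le (min_le_left _ _)
    rw [lt_div_iff₀ hA] at this; exact this.le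
  have hεB : ε * B ≤ 1 / 2 := by
    have := h1.trans_le (min_le_right _ _)
    rw [lt_div_iff₀ (by positivity)] at this; linarith
  let Φ : XX → XX := fun b => φ + ε • DD (NL b)
  let s : Set XX := {b | ‖b - φ‖ ≤ η ∧ IsEven b}
  have hsc : IsClosed s := by
    have e : s = {b | ‖b - φ‖ ≤ η} ∩ ⋂ (k : ℤ) (t : ℝ), {b : XX | b (-k, t) = b (k, t)} := by
      ext b; simp [s, IsEven]
    rw [e]
    refine (isClosed_le (by fun_prop) continuous_const).inter ?_
    refine isClosed_iInter fun k => isClosed_iInter fun t => ?_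
    exact isClosed_eq (BoundedContinuousFunction.lipschitz_eval_const _).continuous
      (BoundedContinuousFunction.lipschitz_eval_const _).continuous
  have hnorm : ∀ b ∈ s, ‖b‖ ≤ R := fun b hb => by
    have : b = φ + (b - φ) := by abel
    calc ‖b‖ = ‖φ + (b - φ)‖ := by rw [← this]
      _ ≤ ‖φ‖ + ‖b - φ‖ := norm_add_le _ _
      _ ≤ R := add_le_add le_rfl hb.1
  have hmap : MapsTo Φ s s := by
    intro b hb
    refine ⟨?_, ?_⟩
    · simp only [Φ, add_sub_cancel_left]
      rw [norm_smul, Real.norm_of_nonneg h0.le]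
      have h2 := (DD_norm (NL b)).trans (NL_norm b R (hnorm b hb))
      calc ε * ‖DD (NL b)‖ ≤ ε * A := by gcongr; linarith
        _ ≤ η := hεA
    · intro k t
      simp only [Φ, BoundedContinuousFunction.add_apply, BoundedContinuousFunction.smul_apply]
      rw [hφ, hb.2.NL.DD k t]
  have hcon : ContractingWith (1 / 2) (hmap.restrict Φ s s) := by
    refine ⟨by rw [← NNReal.coe_lt_coe]; norm_num, LipschitzWith.of_dist_le_mul ?_⟩
    rintro ⟨b, hb⟩ ⟨d, hd⟩
    simp only [Subtype.dist_eq, MapsTo.val_restrict_apply, dist_eq_norm]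
    have e : Φ b - Φ d = ε • DD (NL b - NL d) := by
      simp only [Φ, DD_sub, smul_sub]; abel
    rw [e, norm_smul, Real.norm_of_nonneg h0.le]
    have h2 := (DD_norm (NL b - NL d)).trans (NL_lip b d R (hnorm b hb) (hnorm d hd))
    calc ε * ‖DD (NL b - NL d)‖ ≤ ε * (B * ‖b - d‖) := by gcongr
      _ = (ε * B) * ‖b - d‖ := by ring
      _ ≤ (1 / 2) * ‖b - d‖ := by gcongr
      _ = _ := by norm_num
  obtain ⟨b, hb, hfix, -⟩ := hcon.exists_fixedPoint' hsc.isComplete hmap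
    (x := φ) ⟨by simp [hη.le], hφ⟩ (edist_ne_top _ _)
  exact ⟨b, hb.2, hb.1, hfix.symm⟩


def cc (b : XX) (k : ℤ) (t : ℝ) : ℝ := wt k * b (k, t)

theorem cc_cv (b d : XX) (k : ℤ) (t : ℝ) :
    cc (cv b d) k t = ∑' j, cc b j t * cc d (k - j) t := by
  unfold cc
  rw [cv_apply, ← tsum_mul_left]
  congr 1; ext j
  unfold mw
  have := (wt_pos k).ne'
  field_simp

theorem cc_abs (b : XX) (k : ℤ) (t : ℝ) : |cc b k t| ≤ ‖b‖ * wt k := by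
  unfold cc
  rw [abs_mul, abs_of_pos (wt_pos k), mul_comm]
  exact mul_le_mul_of_nonneg_right (b.norm_coe_le_norm _) (wt_pos k).le

theorem cc_good (b : XX) : Good (cc b) := by
  refine good_of_bound (fun k => ?_) ‖b‖ (cc_abs b)
  have := b.continuous
  unfold cc
  fun_prop

theorem cc_summable (b : XX) (t : ℝ) : Summable fun k => |cc b k t| :=
  Summable.of_nonneg_of_le (fun _ => abs_nonneg _) (fun k => cc_abs b k t) (summable_wt.mul_left _)

theorem cc_even {b : XX} (hb : IsEven b) (k : ℤ) (t : ℝ) : cc b (-k) t = cc b k t := by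
  unfold cc; rw [wt_neg, hb]

theorem Fld_zero (c : ℤ → ℝ → ℝ) (p : ℝ × ℝ) : Fld 0 c p = ∑' k : ℤ, c k p.1 * Real.cos (k * p.2) := by
  unfold Fld; simp

theorem Fld_cv (b d : XX) (hd : IsEven d) (p : ℝ × ℝ) :
    Fld 0 (cc (cv b d)) p = Fld 0 (cc b) p * Fld 0 (cc d) p := by
  rw [Fld_zero, Fld_zero, Fld_zero, cos_prod (cc_summable b p.1) (cc_summable d p.1)
    (fun k => cc_even hd k p.1)]
  congr 1; ext k
  rw [cc_cv]

def aa (k : ℤ) : ℝ :=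
  if k = 1 ∨ k = -1 then 9 * (121 / 1000) / 2 else
    if k = 3 ∨ k = -3 then - (121 / 1000) / 2 else 0

theorem aa_neg (k : ℤ) : aa (-k) = aa k := by
  unfold aa
  have h1 : (-k = 1 ∨ -k = -1) ↔ (k = 1 ∨ k = -1) := by omega
  have h2 : (-k = 3 ∨ -k = -3) ↔ (k = 3 ∨ k = -3) := by omega
  simp only [h1, h2]

theorem aa_supp (k : ℤ) (hk : k ∉ ({-3, -1, 1, 3} : Finset ℤ)) : aa k = 0 := by
  simp only [Finset.mem_insert, Finset.mem_singleton, not_or] at hk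
  unfold aa
  rw [if_neg (by omega), if_neg (by omega)]

def VV (p : ℝ × ℝ) : ℝ :=
  121 / 1000 * (9 * Real.exp (-p.1) * Real.cos p.2 - Real.exp (-(81 * p.1)) * Real.cos (3 * p.2))

theorem VV_eq (p : ℝ × ℝ) :
    ∑' k : ℤ, aa k * Real.exp (-((k : ℝ) ^ 4 * p.1)) * Real.cos (k * p.2) = VV p := by
  rw [tsum_eq_sum (s := ({-3, -1, 1, 3} : Finset ℤ)) (fun k hk => by rw [aa_supp k hk]; simp)]
  rw [Finset.sum_insert (by decide), Finset.sum_insert (by decide), Finset.sum_insert (by decide),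
    Finset.sum_singleton]
  have e1 : aa 1 = 9 * (121 / 1000) / 2 := by unfold aa; norm_num
  have e2 : aa (-1) = 9 * (121 / 1000) / 2 := by unfold aa; norm_num
  have e3 : aa 3 = - (121 / 1000) / 2 := by unfold aa; norm_num
  have e4 : aa (-3) = - (121 / 1000) / 2 := by unfold aa; norm_num
  rw [e1, e2, e3, e4]
  unfold VV
  have c1 : Real.cos (((-3 : ℤ) : ℝ) * p.2) = Real.cos (3 * p.2) := by
    rw [← Real.cos_neg]; congr 1; push_cast; ring
  have c2 : Real.cos (((-1 : ℤ) : ℝ) * p.2) = Real.cos p.2 := by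
    rw [← Real.cos_neg]; congr 1; push_cast; ring
  rw [c1, c2]
  push_cast
  norm_num
  ring

def phiF (p : ℤ × ℝ) : ℝ := aa p.1 * Real.exp (-((p.1 : ℝ) ^ 4 * max p.2 (-1))) / wt p.1

theorem phi_bound (p : ℤ × ℝ) : ‖phiF p‖ ≤
    ∑ k ∈ ({-3, -1, 1, 3} : Finset ℤ), |aa k| * Real.exp ((k : ℝ) ^ 4) / wt k := by
  obtain ⟨k, t⟩ := p
  have hn : ∀ k : ℤ, 0 ≤ |aa k| * Real.exp ((k : ℝ) ^ 4) / wt k := fun k =>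
    div_nonneg (by positivity) (wt_pos k).le
  by_cases hk : k ∈ ({-3, -1, 1, 3} : Finset ℤ)
  · refine le_trans ?_ (Finset.single_le_sum (f := fun k : ℤ => |aa k| * Real.exp ((k : ℝ) ^ 4) / wt k)
      (fun i _ => hn i) hk)
    unfold phiF
    rw [norm_div, norm_mul, Real.norm_eq_abs, Real.norm_of_nonneg (Real.exp_pos _).le,
      Real.norm_of_nonneg (wt_pos k).le]
    have := wt_pos k
    gcongr
    dsimp only
    have h1 : -1 ≤ max t (-1) := le_max_right _ _
    have h2 : 0 ≤ (k : ℝ) ^ 4 := by positivity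
    nlinarith
  · unfold phiF
    dsimp only
    rw [aa_supp k hk]
    simp only [zero_mul, zero_div, norm_zero]
    exact Finset.sum_nonneg (fun i _ => hn i)

def phi : XX :=
  BoundedContinuousFunction.ofNormedAddCommGroup phiF
    (by
      rw [continuous_prod_of_discrete_left]
      intro k
      have : Continuous fun t : ℝ => aa k * Real.exp (-((k : ℝ) ^ 4 * max t (-1))) / wt k :=
        Continuous.div_const (by fun_prop) _
      exact this) _ phi_bound

theorem phi_apply (k : ℤ) (t : ℝ) :
    phi (k, t) = aa k * Real.exp (-((k : ℝ) ^ 4 * max t (-1))) / wt k := rfl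

theorem phi_even : IsEven phi := by
  intro k t
  rw [phi_apply, phi_apply, aa_neg, wt_neg]
  push_cast
  congr 4; ring

theorem Fld_phi (p : ℝ × ℝ) (hp : -1 ≤ p.1) : Fld 0 (cc phi) p = VV p := by
  rw [Fld_zero, ← VV_eq]
  congr 1; ext k
  unfold cc
  rw [phi_apply, max_eq_left hp]
  have := (wt_pos k).ne'
  field_simp

theorem Fld_close (b : XX) (η : ℝ) (hb : ‖b - phi‖ ≤ η) (p : ℝ × ℝ) :
    |Fld 0 (cc b) p - Fld 0 (cc phi) p| ≤ η * ∑' k, wt k := by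
  have e : Fld 0 (cc b) p - Fld 0 (cc phi) p = Fld 0 (cc (b - phi)) p := by
    have : cc b = fun k t => cc (b - phi) k t + cc phi k t := by
      ext k t; unfold cc; rw [BoundedContinuousFunction.sub_apply]; ring
    rw [this, Fld_add (cc_good _) (cc_good _)]
    ring
  rw [e, Fld_zero, ← tsum_mul_left]
  rw [← Real.norm_eq_abs]
  refine tsum_of_norm_bounded (summable_wt.mul_left η).hasSum (fun k => ?_)
  rw [norm_mul, Real.norm_eq_abs, Real.norm_eq_abs]
  calc |cc (b - phi) k p.1| * |Real.cos (k * p.2)| ≤ |cc (b - phi) k p.1| * 1 := by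
        gcongr; exact Real.abs_cos_le_one _
    _ ≤ ‖b - phi‖ * wt k := by rw [mul_one]; exact cc_abs _ _ _
    _ ≤ η * wt k := mul_le_mul_of_nonneg_right hb (wt_pos k).le

theorem cc_deriv (b : XX) (ε : ℝ) (hb : b = phi + ε • DD (NL b)) (k : ℤ) (t : ℝ) (ht : -1 < t) :
    HasDerivAt (cc b k) (-((k : ℝ) ^ 4 * cc b k t)
      - ε * ((k : ℝ) ^ 2 * (cc (cv b (cv b b)) k t - cc b k t))) t := by
  have hb' : ∀ s, b (k, s) = aa k * Real.exp (-((k : ℝ) ^ 4 * max s (-1))) / wt k +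
      ε * (-((k : ℝ) ^ 2) * duh ((k : ℝ) ^ 4) (fun s => NL b (k, s)) s) := fun s => by
    conv_lhs => rw [hb]
    rw [BoundedContinuousFunction.add_apply, BoundedContinuousFunction.smul_apply, DD_apply,
      phi_apply, smul_eq_mul]
  have hw := (wt_pos k).ne'
  have hN := (NL b).continuous
  have h1 := duh_deriv ((k : ℝ) ^ 4) (fun s => NL b (k, s)) (by fun_prop) t ht
  have h2 : HasDerivAt (fun s : ℝ => -((k : ℝ) ^ 4 * s)) (-((k : ℝ) ^ 4)) t := by
    simpa using (hasDerivAt_id t).const_mul ((k : ℝ) ^ 4) |>.fun_neg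
  have h3 := ((h2.exp.const_mul (aa k)).div_const (wt k)).add
    ((h1.const_mul (-((k : ℝ) ^ 2))).const_mul ε)
  have h4 := h3.const_mul (wt k)
  have e : cc b k =ᶠ[nhds t] fun s => wt k * ((fun s => aa k * Real.exp (-((k : ℝ) ^ 4 * s)) / wt k) +
      fun s => ε * (-((k : ℝ) ^ 2) * duh ((k : ℝ) ^ 4) (fun s => NL b (k, s)) s)) s := by
    filter_upwards [Ioi_mem_nhds ht] with s hs
    unfold cc
    rw [hb' s, max_eq_left (le_of_lt (mem_Ioi.1 hs))]
    rfl
  refine (h4.congr_of_eventuallyEq e).congr_deriv ?_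
  have hNL : NL b (k, t) = cv b (cv b b) (k, t) - b (k, t) := rfl
  have hbt := hb' t
  rw [max_eq_left ht.le] at hbt
  unfold cc
  rw [hNL, show -((k : ℝ) ^ 4 * (wt k * b (k, t))) = -((k : ℝ) ^ 4 * (wt k * (aa k * Real.exp (-((k : ℝ) ^ 4 * t)) / wt k +
      ε * (-((k : ℝ) ^ 2) * duh ((k : ℝ) ^ 4) (fun s => NL b (k, s)) t)))) by rw [← hbt]]
  ring

theorem exists_sol (η : ℝ) (hη : 0 < η) : ∃ ε₀ : ℝ, 0 < ε₀ ∧ ∀ ε : ℝ, 0 < ε → ε < ε₀ →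
    ∃ c q : ℤ → ℝ → ℝ, Good c ∧ Good q ∧ (∀ t, c 0 t = 0) ∧
      (∀ k, ∀ t > -1, HasDerivAt (c k)
        (-((k : ℝ) ^ 4 * c k t) - ε * ((k : ℝ) ^ 2 * (q k t - c k t))) t) ∧
      (∀ p, Fld 0 q p = Fld 0 c p ^ 3) ∧
      (∀ p : ℝ × ℝ, -1 ≤ p.1 → |Fld 0 c p - VV p| ≤ η) := by
  have hS : 0 ≤ ∑' k, wt k := tsum_nonneg (fun k => (wt_pos k).le)
  obtain ⟨ε₀, h0, H⟩ := exists_fixed phi phi_even (η / (∑' k, wt k + 1)) (by positivity)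
  refine ⟨ε₀, h0, fun ε h1 h2 => ?_⟩
  obtain ⟨b, hev, hclose, hfix⟩ := H ε h1 h2
  refine ⟨cc b, cc (cv b (cv b b)), cc_good _, cc_good _, fun t => ?_, cc_deriv b ε hfix, fun p => ?_,
    fun p hp => ?_⟩
  · unfold cc
    rw [hfix, BoundedContinuousFunction.add_apply, BoundedContinuousFunction.smul_apply, DD_apply,
      phi_apply]
    simp [aa]
  · rw [Fld_cv b _ (hev.cv hev), Fld_cv b b hev]; ring
  · rw [← Fld_phi p hp]
    refine (Fld_close b _ hclose p).trans ?_
    rw [div_mul_eq_mul_div, div_le_iff₀ (by positivity)]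
    nlinarith


abbrev Adj (c : ℤ → ℝ → ℝ) : Subalgebra ℝ (ℝ × ℝ → ℝ) :=
  Algebra.adjoin ℝ (Set.range fun j => Fld j c)

theorem Adj_mem (c : ℤ → ℝ → ℝ) (j : ℕ) : Fld j c ∈ Adj c :=
  Algebra.subset_adjoin ⟨j, rfl⟩

theorem Adj_cont {c : ℤ → ℝ → ℝ} (hc : Good c) (f : ℝ × ℝ → ℝ) (hf : f ∈ Adj c) : Continuous f := by
  induction hf using Algebra.adjoin_induction with
  | mem x hx => obtain ⟨j, rfl⟩ := hx; exact hc.cont j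
  | algebraMap r => exact continuous_const
  | add x y _ _ h1 h2 => exact h1.add h2
  | mul x y _ _ h1 h2 => exact h1.mul h2

theorem Adj_dx {c : ℤ → ℝ → ℝ} (hc : Good c) (f : ℝ × ℝ → ℝ) (hf : f ∈ Adj c) :
    ∃ fx ∈ Adj c, ∀ p : ℝ × ℝ, HasDerivAt (fun y => f (p.1, y)) (fx p) p.2 := by
  induction hf using Algebra.adjoin_induction with
  | mem x hx =>
    obtain ⟨j, rfl⟩ := hx
    exact ⟨_, Adj_mem c (j + 1), fun p => hc.dx j p.1 p.2⟩
  | algebraMap r => exact ⟨0, zero_mem _, fun p => hasDerivAt_const _ _⟩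
  | add x y _ _ h1 h2 =>
    obtain ⟨u, hu, h1⟩ := h1
    obtain ⟨v, hv, h2⟩ := h2
    exact ⟨u + v, add_mem hu hv, fun p => (h1 p).add (h2 p)⟩
  | mul x y hx hy h1 h2 =>
    obtain ⟨u, hu, h1⟩ := h1
    obtain ⟨v, hv, h2⟩ := h2
    exact ⟨u * y + x * v, add_mem (mul_mem hu hy) (mul_mem hx hv), fun p => (h1 p).mul (h2 p)⟩

theorem Adj_q {c q : ℤ → ℝ → ℝ} (hc : Good c) (hq : Good q)
    (h3 : ∀ p, Fld 0 q p = Fld 0 c p ^ 3) (j : ℕ) : Fld j q ∈ Adj c := by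
  induction j with
  | zero =>
    have : Fld 0 q = Fld 0 c ^ 3 := by ext p; exact h3 p
    rw [this]; exact pow_mem (Adj_mem c 0) 3
  | succ j ih =>
    obtain ⟨fx, hfx, h⟩ := Adj_dx hc _ ih
    have : Fld (j + 1) q = fx := by
      ext p; exact (hq.dx j p.1 p.2).unique (h p)
    rw [this]; exact hfx

def dd (ε : ℝ) (c q : ℤ → ℝ → ℝ) (k : ℤ) (t : ℝ) : ℝ :=
  -((k : ℝ) ^ 4 * c k t) - ε * ((k : ℝ) ^ 2 * (q k t - c k t))

theorem dd_eq (ε : ℝ) (c q : ℤ → ℝ → ℝ) : dd ε c q = fun (k : ℤ) t => (-1) * ((k : ℝ) ^ 4 * c k t) +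
    ((-ε) * ((k : ℝ) ^ 2 * q k t) + ε * ((k : ℝ) ^ 2 * c k t)) := by
  ext k t; unfold dd; ring

theorem dd_good {ε : ℝ} {c q : ℤ → ℝ → ℝ} (hc : Good c) (hq : Good q) : Good (dd ε c q) := by
  rw [dd_eq]
  exact ((hc.kpow 4).smul (-1)).add (((hq.kpow 2).smul (-ε)).add ((hc.kpow 2).smul ε))

theorem Fld_dd {ε : ℝ} {c q : ℤ → ℝ → ℝ} (hc : Good c) (hq : Good q) (j : ℕ) (p : ℝ × ℝ) :
    Fld j (dd ε c q) p = - Fld (j + 4) c p + ε * (Fld (j + 2) q p - Fld (j + 2) c p) := by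
  rw [dd_eq, Fld_add ((hc.kpow 4).smul (-1)) (((hq.kpow 2).smul (-ε)).add ((hc.kpow 2).smul ε)),
    Fld_add ((hq.kpow 2).smul (-ε)) ((hc.kpow 2).smul ε),
    Fld_smul (fun (k : ℤ) t => (k : ℝ) ^ 4 * c k t), Fld_smul (fun (k : ℤ) t => (k : ℝ) ^ 2 * q k t),
    Fld_smul (fun (k : ℤ) t => (k : ℝ) ^ 2 * c k t), Fld_kfour, Fld_ksq, Fld_ksq]
  ring

theorem Good.divsq {c : ℤ → ℝ → ℝ} (h : Good c) : Good (fun k t => c k t / (k : ℝ) ^ 2) := by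
  refine ⟨fun k => (h.1 k).div_const _, fun j => ?_⟩
  obtain ⟨v, hv, hb⟩ := h.2 j
  refine ⟨v, hv, fun k t => ?_⟩
  rw [← mul_div_assoc, abs_div]
  refine le_trans ?_ (hb k t)
  rcases eq_or_ne k 0 with rfl | hk
  · simp; positivity
  have hk1 : (1 : ℝ) ≤ (k : ℝ) ^ 2 := by
    have : (1 : ℤ) ≤ k ^ 2 := by have := sq_nonneg k; have := pow_ne_zero 2 hk; omega
    exact_mod_cast this
  exact div_le_self (abs_nonneg _) (hk1.trans (le_abs_self _))

def GG (c : ℤ → ℝ → ℝ) (p : ℝ × ℝ) : ℝ := - Fld 1 (fun k t => c k t / (k : ℝ) ^ 2) p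

theorem GG_dx {c : ℤ → ℝ → ℝ} (hc : Good c) (h0 : ∀ t, c 0 t = 0) (t x : ℝ) :
    HasDerivAt (fun y => GG c (t, y)) (Fld 0 c (t, x)) x := by
  have h1 := (hc.divsq.dx 1 t x).fun_neg
  refine h1.congr_deriv ?_
  rw [← Fld_ksq]
  congr 1
  ext k t
  rcases eq_or_ne k 0 with rfl | hk
  · simp [h0]
  · have : (k : ℝ) ≠ 0 := by exact_mod_cast hk
    field_simp

theorem GG_dt {ε : ℝ} {c q : ℤ → ℝ → ℝ} (hc : Good c) (hq : Good q)
    (hd : ∀ k, ∀ t > -1, HasDerivAt (c k) (dd ε c q k t) t) (t x : ℝ) (ht : -1 < t) :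
    HasDerivAt (fun s => GG c (s, x))
      (- Fld 3 c (t, x) + ε * (Fld 1 q (t, x) - Fld 1 c (t, x))) t := by
  have h1 := (hc.divsq.dt (dd_good (ε := ε) hc hq).divsq
    (fun k t ht => (hd k t ht).div_const _) 1 t x ht).fun_neg
  refine h1.congr_deriv ?_
  have e : Fld 1 (fun k t => dd ε c q k t / (k : ℝ) ^ 2) (t, x) =
      Fld 1 (fun k t => (-1) * ((k : ℝ) ^ 2 * c k t) + ((-ε) * q k t + ε * c k t)) (t, x) := by
    unfold Fld
    congr 1; ext k
    congr 1
    rcases eq_or_ne k 0 with rfl | hk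
    · simp
    · have : (k : ℝ) ≠ 0 := by exact_mod_cast hk
      unfold dd
      field_simp
      ring
  rw [e, Fld_add ((hc.kpow 2).smul (-1)) ((hq.smul (-ε)).add (hc.smul ε)),
    Fld_add (hq.smul (-ε)) (hc.smul ε), Fld_smul (fun (k : ℤ) t => (k : ℝ) ^ 2 * c k t),
    Fld_smul, Fld_smul, Fld_ksq]
  ring

theorem Adj_dt {ε : ℝ} {c q : ℤ → ℝ → ℝ} (hc : Good c) (hq : Good q)
    (hd : ∀ k, ∀ t > -1, HasDerivAt (c k) (dd ε c q k t) t)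
    (h3 : ∀ p, Fld 0 q p = Fld 0 c p ^ 3) (f : ℝ × ℝ → ℝ) (hf : f ∈ Adj c) :
    ∃ ft ∈ Adj c, ∀ p : ℝ × ℝ, -1 < p.1 → HasDerivAt (fun s => f (s, p.2)) (ft p) p.1 := by
  induction hf using Algebra.adjoin_induction with
  | mem x hx =>
    obtain ⟨j, rfl⟩ := hx
    refine ⟨- Fld (j + 4) c + ε • (Fld (j + 2) q - Fld (j + 2) c), ?_, fun p hp => ?_⟩
    · exact add_mem (neg_mem (Adj_mem c _))
        (Subalgebra.smul_mem _ (sub_mem (Adj_q hc hq h3 _) (Adj_mem c _)) ε)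
    · refine (hc.dt (dd_good (ε := ε) hc hq) hd j p.1 p.2 hp).congr_deriv ?_
      rw [Fld_dd hc hq]
      simp
  | algebraMap r => exact ⟨0, zero_mem _, fun p _ => hasDerivAt_const _ _⟩
  | add x y _ _ h1 h2 =>
    obtain ⟨u, hu, h1⟩ := h1
    obtain ⟨v, hv, h2⟩ := h2
    exact ⟨u + v, add_mem hu hv, fun p hp => (h1 p hp).add (h2 p hp)⟩
  | mul x y hx hy h1 h2 =>
    obtain ⟨u, hu, h1⟩ := h1
    obtain ⟨v, hv, h2⟩ := h2
    exact ⟨u * y + x * v, add_mem (mul_mem hu hy) (mul_mem hx hv),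
      fun p hp => (h1 p hp).mul (h2 p hp)⟩

theorem GG_smooth {ε : ℝ} {c q : ℤ → ℝ → ℝ} (hc : Good c) (hq : Good q) (h0 : ∀ t, c 0 t = 0)
    (hd : ∀ k, ∀ t > -1, HasDerivAt (c k) (dd ε c q k t) t)
    (h3 : ∀ p, Fld 0 q p = Fld 0 c p ^ 3) :
    ContDiffOn ℝ (⊤ : ℕ∞) (GG c) {p : ℝ × ℝ | -1 < p.1} := by
  rw [contDiffOn_infty]
  intro n
  refine contDiffOn_of_closed _ (isOpen_lt continuous_const continuous_fst)
    (fun f => f ∈ Adj c ∨ f = GG c) ?_ ?_ n (GG c) (Or.inr rfl)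
  · rintro f (hf | rfl)
    · exact (Adj_cont hc f hf).continuousOn
    · exact (hc.divsq.cont 1).neg.continuousOn
  · rintro f (hf | rfl)
    · obtain ⟨fx, hfx, h1⟩ := Adj_dx hc f hf
      obtain ⟨ft, hft, h2⟩ := Adj_dt hc hq hd h3 f hf
      exact ⟨ft, fx, Or.inl hft, Or.inl hfx, fun p hp => ⟨h2 p hp, h1 p⟩⟩
    · refine ⟨- Fld 3 c + ε • (Fld 1 q - Fld 1 c), Fld 0 c, Or.inl ?_, Or.inl (Adj_mem c 0),
        fun p hp => ⟨?_, GG_dx hc h0 p.1 p.2⟩⟩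
      · exact add_mem (neg_mem (Adj_mem c _))
          (Subalgebra.smul_mem _ (sub_mem (Adj_q hc hq h3 _) (Adj_mem c _)) ε)
      · exact GG_dt hc hq hd p.1 p.2 hp

theorem GG_periodic (c : ℤ → ℝ → ℝ) (t x : ℝ) (n : ℕ) : GG c (t, x + n * (2 * π)) = GG c (t, x) := by
  unfold GG Fld
  congr 2; ext k
  congr 1
  have : (k : ℝ) * (x + n * (2 * π)) + (1 : ℕ) * (π / 2) =
      (k * x + (1 : ℕ) * (π / 2)) + ((k * n : ℤ) : ℝ) * (2 * π) := by push_cast; ring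
  dsimp only
  rw [this, Real.cos_add_int_mul_two_pi]

theorem Fld_one_odd (e : ℤ → ℝ → ℝ) (t x : ℝ) : Fld 1 e (t, -x) = - Fld 1 e (t, x) := by
  unfold Fld
  rw [← tsum_neg]
  congr 1; ext k
  simp only [Nat.cast_one, one_mul, Real.cos_add_pi_div_two, mul_neg, Real.sin_neg]

theorem GG_odd (c : ℤ → ℝ → ℝ) (t x : ℝ) : GG c (t, -x) = - GG c (t, x) := by
  unfold GG
  rw [Fld_one_odd]

theorem VV_zero (x : ℝ) : |VV (0, x)| ≤ 968 / 1000 := by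
  unfold VV
  simp only [neg_zero, mul_zero, Real.exp_zero, mul_one, one_mul]
  rw [Real.cos_three_mul]
  have h1 := Real.neg_one_le_cos x
  have h2 := Real.cos_le_one x
  set y := Real.cos x
  rw [abs_le]
  constructor
  · nlinarith [mul_nonneg (sq_nonneg (y + 1)) (by linarith : (0 : ℝ) ≤ 2 - y)]
  · nlinarith [mul_nonneg (sq_nonneg (y - 1)) (by linarith : (0 : ℝ) ≤ 2 + y)]

theorem VV_final : 1 + 1 / 100 ≤ VV (1 / 81, 0) := by
  unfold VV
  simp only [mul_zero, Real.cos_zero, mul_one]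
  have h1 : 1 - 1 / 81 ≤ Real.exp (-(1 / 81)) := by
    have := Real.add_one_le_exp (-(1 / 81 : ℝ)); linarith
  have h2 : Real.exp (-(81 * (1 / 81))) ≤ 1 / 2 := by
    have h3 : (2 : ℝ) ≤ Real.exp 1 := by have := Real.add_one_le_exp (1 : ℝ); linarith
    rw [show (-(81 * (1 / 81)) : ℝ) = -1 by norm_num, Real.exp_neg, inv_eq_one_div]
    exact one_div_le_one_div_of_le (by norm_num) h3
  linarith

/-- Theorem 1.5, disproving Conjecture 1 in 1D: for every `ν > 0`
there exist smooth `2π`-periodic mean-zero initial data `h₀` with `‖h₀'‖_∞ < 1`, a time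
`t₀ > 0`, and a smooth `2π`-periodic classical solution `h` of
`∂_t h = ∂_x((∂_x h)³ − ∂_x h) − ν ∂_x⁴ h` on `[0,t₀]` with `h(0,·) = h₀` and
`‖∂_x h(t₀,·)‖_∞ > 1`. -/
theorem stmt4 (ν : ℝ) (hν : 0 < ν) :
    ∃ (h₀ : ℝ → ℝ) (t₀ : ℝ) (h : ℝ → ℝ → ℝ),
      ContDiff ℝ (⊤ : ℕ∞) h₀ ∧
      Function.Periodic h₀ (2 * Real.pi) ∧
      (∫ x in Icc (-Real.pi) Real.pi, h₀ x) = 0 ∧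
      (⨆ x : ℝ, |deriv h₀ x|) < 1 ∧
      0 < t₀ ∧
      (∀ t ∈ Icc 0 t₀, Function.Periodic (h t) (2 * Real.pi)) ∧
      ContDiffOn ℝ (⊤ : ℕ∞) (fun p : ℝ × ℝ => h p.1 p.2) (Icc 0 t₀ ×ˢ univ) ∧
      h 0 = h₀ ∧
      (∀ (x : ℝ), ∀ t ∈ Icc 0 t₀,
        HasDerivWithinAt (fun s => h s x)
          (deriv (fun y => (deriv (h t) y) ^ 3 - deriv (h t) y) x
            - ν * iteratedDeriv 4 (h t) x) (Icc 0 t₀) t) ∧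
      ∃ x : ℝ, 1 < |deriv (h t₀) x| := by
  obtain ⟨ε₀, hε₀, H⟩ := exists_sol (5 / 1000) (by norm_num)
  obtain ⟨K, hK⟩ := exists_nat_gt (max 1 (1 / (ν * ε₀)))
  have hK1 : (1 : ℝ) < K := lt_of_le_of_lt (le_max_left _ _) hK
  have hK2 : 1 / (ν * ε₀) < K := lt_of_le_of_lt (le_max_right _ _) hK
  have hK0 : (0 : ℝ) < K := by linarith
  have hKne : (K : ℝ) ≠ 0 := hK0.ne'
  have hlt : 1 / (ν * (K : ℝ) ^ 2) < ε₀ := by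
    rw [div_lt_iff₀ (by positivity)] at hK2 ⊢
    have : (K : ℝ) ≤ (K : ℝ) ^ 2 := by nlinarith
    have h2 : (K : ℝ) * (ν * ε₀) ≤ (K : ℝ) ^ 2 * (ν * ε₀) :=
      mul_le_mul_of_nonneg_right this (by positivity)
    linarith
  obtain ⟨c, q, hc, hq, h0, hd, h3, hV⟩ := H _ (by positivity) hlt
  set ε := 1 / (ν * (K : ℝ) ^ 2) with hε
  have hsm := GG_smooth hc hq h0 hd h3
  have hD1 : ∀ t x : ℝ, HasDerivAt (fun y => GG c (ν * K ^ 4 * t, K * y) / K)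
      (Fld 0 c (ν * K ^ 4 * t, K * x)) x := by
    intro t x
    have h1 := ((GG_dx hc h0 (ν * K ^ 4 * t) (K * x)).comp x
      ((hasDerivAt_id x).const_mul (K : ℝ))).div_const (K : ℝ)
    refine h1.congr_deriv ?_
    field_simp
  have hDj : ∀ {e : ℤ → ℝ → ℝ} (_ : Good e) (j : ℕ) (t x : ℝ),
      HasDerivAt (fun y => Fld j e (ν * K ^ 4 * t, K * y))
      (K * Fld (j + 1) e (ν * K ^ 4 * t, K * x)) x := by
    intro e he j t x
    have h1 := (he.dx j (ν * K ^ 4 * t) (K * x)).comp x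
      ((hasDerivAt_id x).const_mul (K : ℝ))
    refine h1.congr_deriv ?_
    ring
  have hderiv : ∀ t : ℝ, deriv (fun y => GG c (ν * K ^ 4 * t, K * y) / K) =
      fun x => Fld 0 c (ν * K ^ 4 * t, K * x) := fun t => funext fun x => (hD1 t x).deriv
  have hderivj : ∀ (j : ℕ) (t : ℝ), deriv (fun y => Fld j c (ν * K ^ 4 * t, K * y)) =
      fun x => K * Fld (j + 1) c (ν * K ^ 4 * t, K * x) :=
    fun j t => funext fun x => (hDj hc j t x).deriv
  have hit : ∀ t x : ℝ, iteratedDeriv 4 (fun y => GG c (ν * K ^ 4 * t, K * y) / K) x =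
      K ^ 3 * Fld 3 c (ν * K ^ 4 * t, K * x) := by
    intro t x
    rw [iteratedDeriv_succ', hderiv, iteratedDeriv_succ', hderivj, iteratedDeriv_succ',
      deriv_const_mul_field', hderivj, iteratedDeriv_one]
    have : deriv (fun x => (K : ℝ) * (K * Fld (0 + 1 + 1) c (ν * K ^ 4 * t, K * x))) x =
        (K : ℝ) * (K * (K * Fld (0 + 1 + 1 + 1) c (ν * K ^ 4 * t, K * x))) :=
      (((hDj hc 2 t x).const_mul (K : ℝ)).const_mul (K : ℝ)).deriv
    refine this.trans ?_
    ring
  have hsup : ∀ x, |Fld 0 c (ν * K ^ 4 * 0, K * x)| ≤ 973 / 1000 := by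
    intro x
    rw [mul_zero]
    have h1 := hV (0, K * x) (by norm_num)
    have h2 := VV_zero (K * x)
    rw [abs_le] at *
    constructor <;> linarith [h1.1, h1.2, h2.1, h2.2]
  have hper : ∀ t, Function.Periodic (fun x => GG c (ν * K ^ 4 * t, K * x) / K) (2 * π) := by
    intro t x
    dsimp only
    rw [mul_add, GG_periodic]
  refine ⟨fun x => GG c (ν * K ^ 4 * 0, K * x) / K, 1 / (81 * (ν * K ^ 4)),
    fun t x => GG c (ν * K ^ 4 * t, K * x) / K, ?_, hper 0, ?_, ?_, by positivity,
    fun t _ => hper t, ?_, rfl, ?_, 0, ?_⟩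
  · rw [← contDiffOn_univ]
    refine ContDiffOn.div_const ?_ _
    refine hsm.comp (g := GG c) (f := fun x : ℝ => (ν * (K : ℝ) ^ 4 * 0, (K : ℝ) * x)) ?_ ?_
    · exact ContDiff.contDiffOn (by fun_prop)
    · intro x _
      simp
  · rw [integral_Icc_eq_integral_Ioc, ← intervalIntegral.integral_of_le (by linarith [Real.pi_pos])]
    have h1 := intervalIntegral.integral_comp_neg (a := -π) (b := π)
      (fun x => GG c (ν * K ^ 4 * 0, K * x) / K)
    simp only [mul_neg, GG_odd, neg_div, neg_neg, intervalIntegral.integral_neg] at h1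
    linarith
  · rw [hderiv]
    exact lt_of_le_of_lt (ciSup_le hsup) (by norm_num)
  · refine ContDiffOn.div_const ?_ _
    refine hsm.comp (g := GG c)
      (f := fun p : ℝ × ℝ => (ν * (K : ℝ) ^ 4 * p.1, (K : ℝ) * p.2)) ?_ ?_
    · exact ContDiff.contDiffOn (by fun_prop)
    · rintro ⟨t, x⟩ ⟨⟨ht, _⟩, _⟩
      have : 0 ≤ ν * (K : ℝ) ^ 4 * t := mul_nonneg (by positivity) ht
      simp only [mem_setOf_eq]
      linarith
  · intro x t ht
    have htn : 0 ≤ ν * (K : ℝ) ^ 4 * t := mul_nonneg (by positivity) ht.1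
    refine HasDerivAt.hasDerivWithinAt ?_
    have h1 := ((GG_dt hc hq hd (ν * K ^ 4 * t) (K * x) (by linarith)).comp t
      ((hasDerivAt_id t).const_mul (ν * (K : ℝ) ^ 4))).div_const (K : ℝ)
    refine h1.congr_deriv ?_
    rw [hit, hderiv]
    have h2 : deriv (fun y => Fld 0 c (ν * K ^ 4 * t, K * y) ^ 3 - Fld 0 c (ν * K ^ 4 * t, K * y)) x
        = K * Fld 1 q (ν * K ^ 4 * t, K * x) - K * Fld 1 c (ν * K ^ 4 * t, K * x) := by
      simp only [← h3]
      exact ((hDj hq 0 t x).fun_sub (hDj hc 0 t x)).deriv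
    rw [h2, hε]
    field_simp
    ring
  · rw [hderiv]
    have e : ν * (K : ℝ) ^ 4 * (1 / (81 * (ν * K ^ 4))) = 1 / 81 := by field_simp
    rw [e]; dsimp only; rw [mul_zero]
    have h1 := hV (1 / 81, 0) (by norm_num)
    have h2 := VV_final
    rw [abs_le] at h1
    refine lt_of_lt_of_le ?_ (le_abs_self _)
    linarith [h1.1]
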